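/- Let (g_n) be the sequence of polynomials in ℤ[x] defined by g_0 = 1 and the recursion g_n(x) = Σ_{k=1}^{n} [n choose k]_x · (1-x^{n-k+1})(1-x^{n-k+2})···(1-x^{n-1}) · g_{n-k}(x) · x^{n-k} for n ≥ 1 (with the empty product equal to 1 when k = 1). Then every coefficient of every g_n is a nonnegative integer. -/

import Mathlib

/-!
The polynomial `g_n` is the generating function of
`inv σ + maj σ` over permutations `σ` of `n` letters, which is visibly nonnegative. To avoid
permutations, they are replaced by the refinement according to the last letter: deleting the last
letter of a permutation of `n + 2` letters and standardizing gives the recursion `lastRefined`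
below, whose right-hand side has nonnegative coefficients only.

That the row sums of `lastRefined` obey the recursion of `g` is seen by unrolling: with
`F = lastRefined` the recursion reads
`F (n+1) j = x^(n+1-j) * ((1 - x^(n+1)) * ∑_{i<j} F n i + x^(n+1) * ∑_{i≤n} F n i)`,
and iterating it in the first summand, with the `q`-hockey-stick identity
`∑_{i<j} x^((k+1)(j-1-i)) [i choose k] = [j choose k+1]`, yields the closed form
`lastRefined_eq_sum`. One more hockey-stick summation over `j` gives `rowSum_succ`, the recursion
defining `g`.
-/

open PowerSeries Finset

/-- The Gaussian (q-binomial) polynomial `[n choose k]_x`, written as the element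
`((1-x^{n-k+1})···(1-xⁿ)) / ((1-x)···(1-x^k))` of `ℤ⟦x⟧`. -/
noncomputable def gaussBinom (n k : ℕ) : PowerSeries ℤ :=
  (∏ i ∈ Finset.Icc (n - k + 1) n, (1 - PowerSeries.X ^ i)) *
    Ring.inverse (∏ i ∈ Finset.Icc 1 k, (1 - PowerSeries.X ^ i : PowerSeries ℤ))

/-- The `q`-binomial coefficient, defined by the `q`-Pascal rule. -/
noncomputable def qBinom : ℕ → ℕ → PowerSeries ℤ
  | _, 0 => 1
  | 0, _ + 1 => 0
  | n + 1, k + 1 => qBinom n k + PowerSeries.X ^ (k + 1) * qBinom n (k + 1)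

/-- `qFact n = (1-x)(1-x²)⋯(1-xⁿ)`. -/
noncomputable def qFact (n : ℕ) : PowerSeries ℤ :=
  ∏ i ∈ Finset.Icc 1 n, (1 - PowerSeries.X ^ i)

theorem qFact_succ (n : ℕ) :
    qFact (n + 1) = qFact n * (1 - PowerSeries.X ^ (n + 1)) := by
  rw [qFact, Finset.prod_Icc_succ_top (by omega), qFact]

theorem isUnit_qFact (n : ℕ) : IsUnit (qFact n) := by
  rw [PowerSeries.isUnit_iff_constantCoeff, qFact, map_prod, Finset.prod_eq_one]
  · exact isUnit_one
  · intro i hi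
    have : i ≠ 0 := by have := (Finset.mem_Icc.mp hi).1; omega
    simp [this]

theorem qBinom_eq_zero : ∀ n k : ℕ, n < k → qBinom n k = 0
  | _, 0, h => absurd h (by omega)
  | 0, _ + 1, _ => by rw [qBinom]
  | n + 1, k + 1, h => by
    rw [qBinom, qBinom_eq_zero n k (by omega), qBinom_eq_zero n (k + 1) (by omega)]
    simp

theorem qBinom_self : ∀ n : ℕ, qBinom n n = 1
  | 0 => by rw [qBinom]
  | n + 1 => by
    rw [qBinom, qBinom_self n, qBinom_eq_zero n (n + 1) (by omega)]
    simp

theorem qBinom_mul_qFact : ∀ m k : ℕ,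
    qBinom (m + k) k * qFact k * qFact m = qFact (m + k)
  | m, 0 => by rw [qBinom]; simp [qFact]
  | 0, k + 1 => by rw [Nat.zero_add, qBinom_self]; simp [qFact]
  | m + 1, k + 1 => by
    have h1 := qBinom_mul_qFact (m + 1) k
    have h2 := qBinom_mul_qFact m (k + 1)
    have e1 : m + 1 + (k + 1) = (m + k + 1) + 1 := by omega
    have e2 : m + 1 + k = m + k + 1 := by omega
    have e3 : m + (k + 1) = m + k + 1 := by omega
    rw [e2] at h1
    rw [e3] at h2
    rw [e1, qBinom, qFact_succ (m + k + 1)]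
    rw [qFact_succ m] at h1 ⊢
    rw [qFact_succ k] at h2 ⊢
    linear_combination (1 - PowerSeries.X ^ (k + 1)) * h1 +
      PowerSeries.X ^ (k + 1) * (1 - PowerSeries.X ^ (m + 1)) * h2

theorem qFact_mul_prod (m k : ℕ) :
    qFact m * ∏ i ∈ Finset.Icc (m + 1) (m + k), (1 - PowerSeries.X ^ i : PowerSeries ℤ) =
      qFact (m + k) := by
  induction k with
  | zero => simp
  | succ k ih =>
    rw [← add_assoc, Finset.prod_Icc_succ_top (by omega), ← mul_assoc, ih, qFact_succ]

theorem gaussBinom_eq_qBinom {n k : ℕ} (h : k ≤ n) : gaussBinom n k = qBinom n k := by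
  obtain ⟨m, rfl⟩ := Nat.exists_eq_add_of_le' h
  have h1 := qBinom_mul_qFact m k
  rw [← qFact_mul_prod m k, mul_comm] at h1
  have h2 := (isUnit_qFact m).mul_left_cancel h1
  rw [gaussBinom, Nat.add_sub_cancel, ← h2]
  exact Ring.mul_inverse_cancel_right _ _ (isUnit_qFact k)

/-- The `q`-hockey-stick identity, multiplied by `x^((k+1)(n-j))`. -/
theorem qBinom_hockey (k n j : ℕ) (hj : j ≤ n) :
    ∑ i ∈ Finset.range j, PowerSeries.X ^ ((k + 1) * (n - 1 - i)) * qBinom i k =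
      PowerSeries.X ^ ((k + 1) * (n - j)) * qBinom j (k + 1) := by
  induction j with
  | zero => simp [qBinom]
  | succ j ih =>
    have e : n - j = n - (j + 1) + 1 := by omega
    have e' : n - 1 - j = n - (j + 1) := by omega
    rw [Finset.sum_range_succ, ih (by omega), qBinom, e, e']
    ring

/-- For `j ≤ n`, the generating function of `inv σ + maj σ` over the permutations `σ` of `n + 1`
letters whose last letter is the `j`-th smallest (counting from zero); other `j` carry no meaning.
In the second clause, for `n + 2` letters, deleting the last letter removes `n + 1 - j` inversions,
and `i` is the rank of the new last letter among the remaining ones: a final descent, contributing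
`n + 1` to `maj`, occurs exactly when `j ≤ i`. -/
noncomputable def lastRefined : ℕ → ℕ → PowerSeries ℤ
  | 0, _ => 1
  | n + 1, j => PowerSeries.X ^ (n + 1 - j) *
      (∑ i ∈ Finset.range j, lastRefined n i +
        PowerSeries.X ^ (n + 1) * ∑ i ∈ Finset.Ico j (n + 1), lastRefined n i)

/-- The generating function of `inv + maj` over the permutations of `n` letters. -/
noncomputable def rowSum : ℕ → PowerSeries ℤ
  | 0 => 1
  | n + 1 => ∑ j ∈ Finset.range (n + 1), lastRefined n j

theorem lastRefined_succ {n j : ℕ} (hj : j ≤ n + 1) :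
    lastRefined (n + 1) j = PowerSeries.X ^ (n + 1 - j) *
      ((1 - PowerSeries.X ^ (n + 1)) * ∑ i ∈ Finset.range j, lastRefined n i +
        PowerSeries.X ^ (n + 1) * rowSum (n + 1)) := by
  rw [lastRefined, rowSum, ← Finset.sum_range_add_sum_Ico _ hj]
  ring

theorem lastRefined_eq_sum (n : ℕ) : ∀ j ≤ n, lastRefined n j =
    ∑ k ∈ Finset.range (n + 1),
      (∏ i ∈ Finset.Icc (n - k + 1) n, (1 - PowerSeries.X ^ i)) * rowSum (n - k) *
        PowerSeries.X ^ (n - k) * (PowerSeries.X ^ ((k + 1) * (n - j)) * qBinom j k) := by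
  induction n with
  | zero =>
    intro j hj
    obtain rfl : j = 0 := by omega
    simp [lastRefined, rowSum, qBinom]
  | succ n ih =>
    intro j hj
    rw [lastRefined_succ hj, Finset.sum_range_succ', mul_add]
    congr 1
    · rw [Finset.sum_congr rfl
        (fun i hi => ih i (by have := Finset.mem_range.mp hi; omega)),
        Finset.sum_comm, Finset.mul_sum, Finset.mul_sum]
      refine Finset.sum_congr rfl fun k hk => ?_
      have hk' := Finset.mem_range.mp hk
      have h := qBinom_hockey k (n + 1) j hj
      rw [Nat.add_sub_cancel] at h
      rw [← Finset.mul_sum, h, Nat.add_sub_add_right, Finset.prod_Icc_succ_top (by omega)]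
      ring
    · simp [qBinom]
      ring

theorem rowSum_succ (n : ℕ) : rowSum (n + 1) =
    ∑ k ∈ Finset.range (n + 1),
      (∏ i ∈ Finset.Icc (n - k + 1) n, (1 - PowerSeries.X ^ i)) * rowSum (n - k) *
        PowerSeries.X ^ (n - k) * qBinom (n + 1) (k + 1) := by
  rw [rowSum, Finset.sum_congr rfl
    (fun j hj => lastRefined_eq_sum n j (by have := Finset.mem_range.mp hj; omega)),
    Finset.sum_comm]
  refine Finset.sum_congr rfl fun k _ => ?_
  have h := qBinom_hockey k (n + 1) (n + 1) le_rfl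
  rw [Nat.add_sub_cancel, Nat.sub_self, Nat.mul_zero, pow_zero, one_mul] at h
  rw [← Finset.mul_sum, h]

/-- The power series with nonnegative coefficients, as the image of `ℕ⟦x⟧` in `ℤ⟦x⟧`. -/
noncomputable def nonnegSeries : Subsemiring (PowerSeries ℤ) :=
  (PowerSeries.map (Nat.castRingHom ℤ)).rangeS

theorem X_pow_mem_nonnegSeries (n : ℕ) : (PowerSeries.X ^ n : PowerSeries ℤ) ∈ nonnegSeries :=
  pow_mem (RingHom.mem_rangeS.mpr ⟨PowerSeries.X, PowerSeries.map_X _⟩) n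

theorem lastRefined_mem (n : ℕ) : ∀ j, lastRefined n j ∈ nonnegSeries := by
  induction n with
  | zero => intro j; rw [lastRefined]; exact one_mem _
  | succ n ih =>
    intro j
    rw [lastRefined]
    exact mul_mem (X_pow_mem_nonnegSeries _) (add_mem (sum_mem fun i _ => ih i)
      (mul_mem (X_pow_mem_nonnegSeries _) (sum_mem fun i _ => ih i)))

theorem rowSum_mem : ∀ n, rowSum n ∈ nonnegSeries
  | 0 => by rw [rowSum]; exact one_mem _
  | n + 1 => by rw [rowSum]; exact sum_mem fun j _ => lastRefined_mem n j

/-- If g₀ = 1 and gₙ(x) = Σ_{k=1}^{n} [n choose k]_x ·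
(1-x^{n-k+1})···(1-x^{n-1}) · g_{n-k}(x) · x^{n-k}, then every coefficient of
every gₙ is nonnegative. -/
theorem g_coeff_nonneg (g : ℕ → Polynomial ℤ) (hg0 : g 0 = 1)
    (hg : ∀ n, 1 ≤ n →
      (g n : PowerSeries ℤ) =
        ∑ k ∈ Finset.Icc 1 n,
          gaussBinom n k *
            (∏ j ∈ Finset.Icc (n - k + 1) (n - 1), (1 - PowerSeries.X ^ j)) *
            (g (n - k) : PowerSeries ℤ) * PowerSeries.X ^ (n - k)) :
    ∀ n i, 0 ≤ (g n).coeff i := by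
  have key : ∀ n, (g n : PowerSeries ℤ) = rowSum n := by
    intro n
    induction n using Nat.strong_induction_on with
    | _ n ih =>
      cases n with
      | zero => rw [hg0, rowSum, Polynomial.coe_one]
      | succ n =>
        rw [hg (n + 1) (by omega), rowSum_succ]
        refine (Finset.sum_bij (fun k _ => k + 1) ?_ ?_ ?_ ?_).symm
        · intro k hk
          have := Finset.mem_range.mp hk
          exact Finset.mem_Icc.mpr ⟨by omega, by omega⟩
        · intro a _ b _ hab
          omega
        · intro k hk
          have := Finset.mem_Icc.mp hk
          exact ⟨k - 1, Finset.mem_range.mpr (by omega), by omega⟩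
        · intro k hk
          have := Finset.mem_range.mp hk
          rw [gaussBinom_eq_qBinom (by omega : k + 1 ≤ n + 1), Nat.add_sub_add_right,
            ih (n - k) (by omega), Nat.add_sub_cancel]
          ring
  intro n i
  obtain ⟨p, hp⟩ := rowSum_mem n
  rw [← Polynomial.coeff_coe, key n, ← hp, PowerSeries.coeff_map]
  exact Int.natCast_nonneg _
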